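/- arXiv:2101.05686 — 2 statements merged into one kernel-verified Lean document; each statement's English description precedes it below -/
import Mathlib

section
/- Let p_H, p_V ∈ [0,1] and let Γ and Γ̃ be the generalized erasure channel of the polarization dependent loss operation and its complementary channel. Then there exist finitely many 3×3 matrices K_1,…,K_M with Σ_m K_mᴴ K_m = I such that Σ_m K_m Γ̃(ρ) K_mᴴ = Γ(ρ) for every 2×2 matrix ρ (i.e., Γ is antidegradable) if and only if max(p_H, p_V) ≤ 1/2, or p_H = 0, or p_V = 0. -/
open Matrix ComplexOrder

/-- The generalized erasure channel of the polarization dependent loss operation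
Λ(ρ) = AρAᴴ with A = diag(√p_H, √p_V). -/
noncomputable def GammaPDL (pH pV : ℝ) (ρ : Matrix (Fin 2) (Fin 2) ℂ) :
    Matrix (Fin 3) (Fin 3) ℂ :=
  !![(pH : ℂ) * ρ 0 0, (Real.sqrt (pH * pV) : ℂ) * ρ 0 1, 0;
     (Real.sqrt (pH * pV) : ℂ) * ρ 1 0, (pV : ℂ) * ρ 1 1, 0;
     0, 0, ρ.trace - (pH : ℂ) * ρ 0 0 - (pV : ℂ) * ρ 1 1]

/-- The complementary channel of the generalized erasure channel of the polarization
dependent loss operation. -/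
noncomputable def GammaPDLc (pH pV : ℝ) (ρ : Matrix (Fin 2) (Fin 2) ℂ) :
    Matrix (Fin 3) (Fin 3) ℂ :=
  !![(pH : ℂ) * ρ 0 0 + (pV : ℂ) * ρ 1 1, 0, 0;
     0, ((1 - pH : ℝ) : ℂ) * ρ 0 0, (Real.sqrt ((1 - pH) * (1 - pV)) : ℂ) * ρ 0 1;
     0, (Real.sqrt ((1 - pH) * (1 - pV)) : ℂ) * ρ 1 0, ((1 - pV : ℝ) : ℂ) * ρ 1 1]

/-!
Necessity only needs the populations. The degrading map acts on diagonal states by a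
column-stochastic matrix. The complementary output of the polarization state `V` populates level
`0` with weight `pV`, while `Γ` never maps `V` to `H`; so, when `pV ≠ 0`, level `0` cannot feed the
output `H`. For the input `H` all of the population `pH` must then come from the other levels, which
carry only `1 - pH`, whence `pH ≤ 1 / 2`; likewise with `H` and `V` exchanged.

For sufficiency one attenuates the lost photon, keeping `H` and `V` with probabilities
`pH / (1 - pH)` and `pV / (1 - pV)`, and declares an erasure otherwise. If one of the
polarizations is never transmitted, level `0` reveals that the photon arrived in the other one, and
that polarization can be prepared afresh.
-/

section Kraus

variable {𝕜 ι m n : Type*} [RCLike 𝕜] [Fintype ι]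

/-- The completely positive map `X ↦ ∑ k, K k * X * (K k)ᴴ` with Kraus operators `K`. -/
def krausMap [Fintype n] (K : ι → Matrix m n 𝕜) (X : Matrix n n 𝕜) : Matrix m m 𝕜 :=
  ∑ k, K k * X * (K k)ᴴ

/-- The population that `krausMap K` transfers from the basis state `j` to the basis state `i`.
It is a nonnegative real number, taken in `𝕜` to avoid casts. -/
def krausTransition (K : ι → Matrix m n 𝕜) (i : m) (j : n) : 𝕜 :=
  ∑ k, star (K k i j) * K k i j

lemma krausTransition_nonneg (K : ι → Matrix m n 𝕜) (i : m) (j : n) :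
    0 ≤ krausTransition K i j :=
  Finset.sum_nonneg fun _ _ => star_mul_self_nonneg _

lemma sum_krausTransition [Fintype m] (K : ι → Matrix m n 𝕜) (j : n) :
    ∑ i, krausTransition K i j = (∑ k, (K k)ᴴ * K k) j j := by
  simp only [krausTransition, Matrix.sum_apply, mul_apply, conjTranspose_apply]
  exact Finset.sum_comm

lemma krausTransition_le_one [Fintype m] [DecidableEq n] {K : ι → Matrix m n 𝕜}
    (hK : ∑ k, (K k)ᴴ * K k = 1) (i : m) (j : n) : krausTransition K i j ≤ 1 :=
  calc krausTransition K i j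
      ≤ ∑ l, krausTransition K l j :=
        Finset.single_le_sum (f := fun l => krausTransition K l j)
          (fun l _ => krausTransition_nonneg K l j) (Finset.mem_univ i)
    _ = 1 := by rw [sum_krausTransition, hK, one_apply_eq]

variable [Fintype n] [DecidableEq n]

lemma krausMap_diagonal_apply_self (K : ι → Matrix m n 𝕜) (d : n → 𝕜) (i : m) :
    krausMap K (diagonal d) i i = ∑ j, krausTransition K i j * d j := by
  simp only [krausMap, krausTransition, Matrix.sum_apply, mul_apply (N := (_)ᴴ), mul_diagonal,
    conjTranspose_apply, Finset.sum_mul]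
  rw [Finset.sum_comm]
  exact Finset.sum_congr rfl fun j _ => Finset.sum_congr rfl fun k _ => by ring

lemma krausTransition_eq_zero_of_krausMap_diagonal {K : ι → Matrix m n 𝕜}
    {d : n → 𝕜} (hd : 0 ≤ d) {i : m} (h : krausMap K (diagonal d) i i = 0) {j : n}
    (hj : d j ≠ 0) : krausTransition K i j = 0 := by
  rw [krausMap_diagonal_apply_self, Finset.sum_eq_zero_iff_of_nonneg
    fun l _ => mul_nonneg (krausTransition_nonneg K i l) (hd l)] at h
  exact (mul_eq_zero.1 (h j (Finset.mem_univ j))).resolve_right hj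

lemma krausMap_diagonal_apply_self_add_le_sum [Fintype m] {K : ι → Matrix m n 𝕜}
    (hK : ∑ k, (K k)ᴴ * K k = 1) {d : n → 𝕜} (hd : 0 ≤ d) {i : m} {j : n}
    (hij : krausTransition K i j = 0) :
    krausMap K (diagonal d) i i + d j ≤ ∑ l, d l :=
  calc krausMap K (diagonal d) i i + d j
      = ∑ l ∈ Finset.univ.erase j, krausTransition K i l * d l + d j := by
        rw [krausMap_diagonal_apply_self, Finset.sum_erase _ (by rw [hij, zero_mul])]
    _ ≤ ∑ l ∈ Finset.univ.erase j, d l + d j := by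
        gcongr with l
        exact mul_le_of_le_one_left (hd l) (krausTransition_le_one hK i l)
    _ = ∑ l, d l := Finset.sum_erase_add _ _ (Finset.mem_univ j)

end Kraus

section Necessity

lemma GammaPDL_single_zero (pH pV : ℝ) :
    GammaPDL pH pV (single 0 0 1) = diagonal ![(pH : ℂ), 0, 1 - pH] := by
  ext i j
  fin_cases i <;> fin_cases j <;> simp [GammaPDL]

lemma GammaPDL_single_one (pH pV : ℝ) :
    GammaPDL pH pV (single 1 1 1) = diagonal ![0, (pV : ℂ), 1 - pV] := by
  ext i j
  fin_cases i <;> fin_cases j <;> simp [GammaPDL]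

lemma GammaPDLc_single_zero (pH pV : ℝ) :
    GammaPDLc pH pV (single 0 0 1) = diagonal ![(pH : ℂ), 1 - pH, 0] := by
  ext i j
  fin_cases i <;> fin_cases j <;> simp [GammaPDLc]

lemma GammaPDLc_single_one (pH pV : ℝ) :
    GammaPDLc pH pV (single 1 1 1) = diagonal ![(pV : ℂ), 0, 1 - pV] := by
  ext i j
  fin_cases i <;> fin_cases j <;> simp [GammaPDLc]

lemma vec_ofReal_one_sub_zero_nonneg {p : ℝ} (hp : p ∈ Set.Icc (0 : ℝ) 1) :
    0 ≤ ![(p : ℂ), 1 - p, 0] := by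
  intro i
  fin_cases i
  · simpa using hp.1
  · simpa using Complex.real_le_real.2 hp.2
  · simp

lemma vec_ofReal_zero_one_sub_nonneg {p : ℝ} (hp : p ∈ Set.Icc (0 : ℝ) 1) :
    0 ≤ ![(p : ℂ), 0, 1 - p] := by
  intro i
  fin_cases i
  · simpa using hp.1
  · simp
  · simpa using Complex.real_le_real.2 hp.2

variable {ι : Type*} [Fintype ι] {K : ι → Matrix (Fin 3) (Fin 3) ℂ} {pH pV : ℝ}

lemma pH_le_half_of_krausMap_GammaPDLc (hH : pH ∈ Set.Icc (0 : ℝ) 1)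
    (hV : pV ∈ Set.Icc (0 : ℝ) 1) (hV0 : pV ≠ 0) (hK : ∑ k, (K k)ᴴ * K k = 1)
    (hΓ : ∀ ρ, krausMap K (GammaPDLc pH pV ρ) = GammaPDL pH pV ρ) : pH ≤ 1 / 2 := by
  have no_flag_to_H : krausTransition K 0 0 = 0 := by
    refine krausTransition_eq_zero_of_krausMap_diagonal
      (vec_ofReal_zero_one_sub_nonneg hV) ?_ (by simpa using hV0)
    rw [← GammaPDLc_single_one pH, hΓ, GammaPDL_single_one]
    simp
  have hle : (pH + pH : ℂ) ≤ 1 := by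
    simpa [← GammaPDLc_single_zero pH pV, hΓ, GammaPDL_single_zero, Fin.sum_univ_three]
      using krausMap_diagonal_apply_self_add_le_sum hK (vec_ofReal_one_sub_zero_nonneg hH)
        no_flag_to_H
  have hle' : pH + pH ≤ 1 := by exact_mod_cast hle
  linarith

lemma pV_le_half_of_krausMap_GammaPDLc (hH : pH ∈ Set.Icc (0 : ℝ) 1)
    (hV : pV ∈ Set.Icc (0 : ℝ) 1) (hH0 : pH ≠ 0) (hK : ∑ k, (K k)ᴴ * K k = 1)
    (hΓ : ∀ ρ, krausMap K (GammaPDLc pH pV ρ) = GammaPDL pH pV ρ) : pV ≤ 1 / 2 := by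
  have no_flag_to_V : krausTransition K 1 0 = 0 := by
    refine krausTransition_eq_zero_of_krausMap_diagonal
      (vec_ofReal_one_sub_zero_nonneg hH) ?_ (by simpa using hH0)
    rw [← GammaPDLc_single_zero pH pV, hΓ, GammaPDL_single_zero]
    simp
  have hle : (pV + pV : ℂ) ≤ 1 := by
    simpa [← GammaPDLc_single_one pH, hΓ, GammaPDL_single_one, Fin.sum_univ_three]
      using krausMap_diagonal_apply_self_add_le_sum hK (vec_ofReal_zero_one_sub_nonneg hV)
        no_flag_to_V
  have hle' : pV + pV ≤ 1 := by exact_mod_cast hle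
  linarith

end Necessity

section Sufficiency

lemma ofReal_sqrt_mul_self {x : ℝ} (hx : 0 ≤ x) : (√x : ℂ) * √x = x := by
  exact_mod_cast Real.mul_self_sqrt hx

/-- Kraus operators of the candidate degrading map. Upon finding level `0` it prepares level `c`; it
attenuates the levels `1` and `2` into the outputs `H` (level `0`) and `V` (level `1`) with
transmission probabilities `a` and `b`, and sends the rest to the erasure level `2`. -/
noncomputable def attenuationKraus (a b : ℝ) (c : Fin 3) : Fin 4 → Matrix (Fin 3) (Fin 3) ℂ :=
  ![single c 0 1,
    single 0 1 (√a : ℂ) + single 1 2 (√b : ℂ),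
    single 2 1 (√(1 - a) : ℂ),
    single 2 2 (√(1 - b) : ℂ)]

variable {a b : ℝ}

lemma sum_conjTranspose_mul_attenuationKraus (ha : a ∈ Set.Icc (0 : ℝ) 1)
    (hb : b ∈ Set.Icc (0 : ℝ) 1) (c : Fin 3) :
    ∑ k, (attenuationKraus a b c k)ᴴ * attenuationKraus a b c k = 1 := by
  simp only [Fin.sum_univ_four, attenuationKraus]
  ext i j
  fin_cases i <;> fin_cases j <;> simp [conjTranspose_single, add_mul, mul_add,
    ofReal_sqrt_mul_self, ha.1, ha.2, hb.1, hb.2]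

lemma krausMap_attenuationKraus (ha : a ∈ Set.Icc (0 : ℝ) 1)
    (hb : b ∈ Set.Icc (0 : ℝ) 1) (c : Fin 3) (X : Matrix (Fin 3) (Fin 3) ℂ) :
    krausMap (attenuationKraus a b c) X =
      single c c (X 0 0) +
      !![a * X 1 1, √(a * b) * X 1 2, 0;
         √(a * b) * X 2 1, b * X 2 2, 0;
         0, 0, (1 - a) * X 1 1 + (1 - b) * X 2 2] := by
  simp only [krausMap, Fin.sum_univ_four, attenuationKraus]
  ext i j
  fin_cases i <;> fin_cases j <;> simp [conjTranspose_single, add_mul, mul_add,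
    single_mul_mul_single, mul_right_comm _ (X _ _), ofReal_sqrt_mul_self,
    ha.1, ha.2, hb.1, hb.2, Real.sqrt_mul, mul_comm (√b : ℂ) √a, add_assoc]

lemma div_one_sub_mem_Icc {p : ℝ} (hp : p ∈ Set.Icc (0 : ℝ) (1 / 2)) :
    p / (1 - p) ∈ Set.Icc (0 : ℝ) 1 :=
  ⟨div_nonneg hp.1 (by linarith [hp.2]), (div_le_one (by linarith [hp.2])).2 (by linarith [hp.2])⟩

lemma sqrt_div_one_sub_mul_sqrt {p q : ℝ} (hp : p ∈ Set.Ico (0 : ℝ) 1)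
    (hq : q ∈ Set.Ico (0 : ℝ) 1) :
    √(p / (1 - p) * (q / (1 - q))) * √((1 - p) * (1 - q)) = √(p * q) := by
  have hp1 : 0 < 1 - p := sub_pos.2 hp.2
  have hq1 : 0 < 1 - q := sub_pos.2 hq.2
  rw [← Real.sqrt_mul (mul_nonneg (div_nonneg hp.1 hp1.le) (div_nonneg hq.1 hq1.le))]
  congr 1
  field_simp

lemma krausMap_attenuationKraus_GammaPDLc_of_le_half {pH pV : ℝ}
    (hH : pH ∈ Set.Icc (0 : ℝ) (1 / 2)) (hV : pV ∈ Set.Icc (0 : ℝ) (1 / 2))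
    (ρ : Matrix (Fin 2) (Fin 2) ℂ) :
    krausMap (attenuationKraus (pH / (1 - pH)) (pV / (1 - pV)) 2) (GammaPDLc pH pV ρ) =
      GammaPDL pH pV ρ := by
  have hH1 : pH < 1 := hH.2.trans_lt one_half_lt_one
  have hV1 : pV < 1 := hV.2.trans_lt one_half_lt_one
  have hH0 : (1 - pH : ℂ) ≠ 0 := by exact_mod_cast (sub_pos.2 hH1).ne'
  have hV0 : (1 - pV : ℂ) ≠ 0 := by exact_mod_cast (sub_pos.2 hV1).ne'
  rw [krausMap_attenuationKraus (div_one_sub_mem_Icc hH) (div_one_sub_mem_Icc hV), GammaPDL,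
    ← sqrt_div_one_sub_mul_sqrt ⟨hH.1, hH1⟩ ⟨hV.1, hV1⟩]
  ext i j
  fin_cases i <;> fin_cases j <;> simp [GammaPDLc, trace_fin_two] <;> field_simp
  ring

lemma krausMap_attenuationKraus_GammaPDLc_zero_left (pV : ℝ) (ρ : Matrix (Fin 2) (Fin 2) ℂ) :
    krausMap (attenuationKraus 0 0 1) (GammaPDLc 0 pV ρ) = GammaPDL 0 pV ρ := by
  rw [krausMap_attenuationKraus (by simp) (by simp)]
  ext i j
  fin_cases i <;> fin_cases j <;> simp [GammaPDL, GammaPDLc, trace_fin_two]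
  ring

lemma krausMap_attenuationKraus_GammaPDLc_zero_right (pH : ℝ) (ρ : Matrix (Fin 2) (Fin 2) ℂ) :
    krausMap (attenuationKraus 0 0 0) (GammaPDLc pH 0 ρ) = GammaPDL pH 0 ρ := by
  rw [krausMap_attenuationKraus (by simp) (by simp)]
  ext i j
  fin_cases i <;> fin_cases j <;> simp [GammaPDL, GammaPDLc, trace_fin_two]
  ring

end Sufficiency

/-- the generalized erasure channel of the polarization dependent loss
operation is antidegradable iff max(p_H, p_V) ≤ 1/2, or p_H = 0, or p_V = 0. -/
theorem pdl_gec_antidegradable_iff (pH pV : ℝ)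
    (hH : pH ∈ Set.Icc (0:ℝ) 1) (hV : pV ∈ Set.Icc (0:ℝ) 1) :
    (∃ (M : ℕ) (Km : Fin M → Matrix (Fin 3) (Fin 3) ℂ),
      ∑ m, (Km m)ᴴ * Km m = 1 ∧
      ∀ ρ : Matrix (Fin 2) (Fin 2) ℂ,
        ∑ m, Km m * GammaPDLc pH pV ρ * (Km m)ᴴ = GammaPDL pH pV ρ)
    ↔ (max pH pV ≤ 1/2 ∨ pH = 0 ∨ pV = 0) := by
  constructor
  · rintro ⟨M, K, hK, hΓ⟩
    by_cases hH0 : pH = 0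
    · exact .inr (.inl hH0)
    by_cases hV0 : pV = 0
    · exact .inr (.inr hV0)
    exact .inl (max_le (pH_le_half_of_krausMap_GammaPDLc hH hV hV0 hK hΓ)
      (pV_le_half_of_krausMap_GammaPDLc hH hV hH0 hK hΓ))
  · rintro (hmax | rfl | rfl)
    · obtain ⟨hH', hV'⟩ := max_le_iff.1 hmax
      exact ⟨4, _, sum_conjTranspose_mul_attenuationKraus (div_one_sub_mem_Icc ⟨hH.1, hH'⟩)
        (div_one_sub_mem_Icc ⟨hV.1, hV'⟩) 2,
        krausMap_attenuationKraus_GammaPDLc_of_le_half ⟨hH.1, hH'⟩ ⟨hV.1, hV'⟩⟩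
    · exact ⟨4, _, sum_conjTranspose_mul_attenuationKraus (by simp) (by simp) 1,
        krausMap_attenuationKraus_GammaPDLc_zero_left pV⟩
    · exact ⟨4, _, sum_conjTranspose_mul_attenuationKraus (by simp) (by simp) 0,
        krausMap_attenuationKraus_GammaPDLc_zero_right pH⟩
end

section
/- Let p_H, p_V ∈ (0,1] with max(p_H, p_V) > 1/2, and let q(ρ) = S(Γ(ρ)) − S(Γ̃(ρ)) be the coherent information of the generalized erasure channel of the polarization dependent loss operation. Then the supremum of q over all 2×2 density matrices equals the supremum of q over diagonal density matrices: sup_{ρ density} q(ρ) = sup_{z ∈ [−1,1]} q(diag((1+z)/2, (1−z)/2)). -/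
open Matrix ComplexOrder

/-- The von Neumann entropy S(ρ) = Σ_i −λ_i log λ_i over the eigenvalues of a Hermitian
matrix (and 0 on non-Hermitian matrices). Natural logarithm, 0 log 0 = 0. -/
noncomputable def vnEnt {n : Type*} [Fintype n] [DecidableEq n] (ρ : Matrix n n ℂ) : ℝ :=
  if h : ρ.IsHermitian then ∑ i, -(h.eigenvalues i * Real.log (h.eigenvalues i)) else 0

/-!
Write `Λ` for the loss operation, `Λᶜ` for the one with the complementary transmissivities
`1 - p_H`, `1 - p_V`, and `E M = S(M) - η(tr M)` with `η x = -x log x`. Both channels are block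
diagonal, and as `tr Λρ + tr Λᶜρ = 1`, the scalar blocks combine to `q(ρ) = E(Λρ) - E(Λᶜρ)`.

On `2 × 2` positive semidefinite matrices of fixed determinant, `E` decreases as the trace grows;
this reduces to `(x - y) log ((x + y) / x) ≤ y log (x / y)` for the eigenvalues `y ≤ x`. Given `ρ`,
one of the two diagonal states `σ` of determinant `det ρ` satisfies `tr Λσ ≤ tr Λρ`, hence also
`tr Λᶜσ ≥ tr Λᶜρ`. As `Λ` and `Λᶜ` multiply determinants by constants, `q(ρ) ≤ q(σ)` follows.
-/

open Real (log negMulLog)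

lemma mul_log_add_sub_log_le {x y : ℝ} (hy : 0 < y) (hyx : y ≤ x) :
    x * (log (x + y) - log x) ≤ y * (log (x + y) - log y) := by
  have hx : 0 < x := hy.trans_le hyx
  have log_add_le : log (x + y) - log x ≤ y / x := by
    have h := Real.log_le_sub_one_of_pos (show 0 < (x + y) / x by positivity)
    rwa [Real.log_div (by positivity) hx.ne', add_div, div_self hx.ne', add_sub_cancel_left] at h
  have one_sub_le : 1 - y / x ≤ log x - log y := by
    have h := Real.log_le_sub_one_of_pos (show 0 < y / x by positivity)
    rw [Real.log_div hy.ne' hx.ne'] at h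
    linarith
  have cross : (x - y) * (log (x + y) - log x) ≤ y * (log x - log y) :=
    calc (x - y) * (log (x + y) - log x)
        ≤ (x - y) * (y / x) := mul_le_mul_of_nonneg_left log_add_le (sub_nonneg.2 hyx)
      _ = y * (1 - y / x) := by field_simp
      _ ≤ y * (log x - log y) := mul_le_mul_of_nonneg_left one_sub_le hy.le
  linarith

/-- The binary entropy of the weights `x, y` scaled by their sum: for `0 ≤ x, y` with `x + y ≠ 0`
it equals `(x + y) * h (x / (x + y))`, where `h` is the binary entropy function. -/
noncomputable def splitEntropy (x y : ℝ) : ℝ := negMulLog x + negMulLog y - negMulLog (x + y)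

lemma splitEntropy_comm (x y : ℝ) : splitEntropy x y = splitEntropy y x := by
  simp only [splitEntropy, add_comm]

lemma splitEntropy_eq_zero_of_mul_eq_zero {x y : ℝ} (h : x * y = 0) : splitEntropy x y = 0 := by
  rcases mul_eq_zero.1 h with rfl | rfl <;> simp [splitEntropy]

lemma hasDerivAt_splitEntropy {f g : ℝ → ℝ} {f' g' t : ℝ} (hf : HasDerivAt f f' t)
    (hg : HasDerivAt g g' t) (hft : f t ≠ 0) (hgt : g t ≠ 0) (hfgt : f t + g t ≠ 0) :
    HasDerivAt (fun s => splitEntropy (f s) (g s))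
      (f' * (log (f t + g t) - log (f t)) + g' * (log (f t + g t) - log (g t))) t := by
  have h := (((Real.hasDerivAt_negMulLog hft).comp t hf).add
    ((Real.hasDerivAt_negMulLog hgt).comp t hg)).sub
    ((Real.hasDerivAt_negMulLog (x := (f + g) t) hfgt).comp t (hf.add hg))
  exact h.congr_deriv (by simp only [Pi.add_apply]; ring)

lemma antitoneOn_splitEntropy_div {D : ℝ} (hD : 0 < D) :
    AntitoneOn (fun x => splitEntropy x (D / x)) (Set.Ici √D) := by
  have pos_of_le {x : ℝ} (hx : √D ≤ x) : 0 < x := (Real.sqrt_pos.2 hD).trans_le hx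
  have hderiv (x : ℝ) (hx : √D ≤ x) : HasDerivAt (fun x => splitEntropy x (D / x))
      ((x * (log (x + D / x) - log x) - D / x * (log (x + D / x) - log (D / x))) / x) x := by
    have hx0 := pos_of_le hx
    have hdiv : HasDerivAt (fun x => D / x) (-(D / x) / x) x := by
      refine ((hasDerivAt_inv hx0.ne').const_mul D).congr_deriv ?_
      field_simp
    refine (hasDerivAt_splitEntropy (hasDerivAt_id' x) hdiv hx0.ne' (by positivity)
      (by positivity)).congr_deriv ?_
    field_simp
    ring
  refine antitoneOn_of_hasDerivWithinAt_nonpos (convex_Ici _)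
    (fun x hx => (hderiv x hx).continuousAt.continuousWithinAt)
    (fun x hx => (hderiv x (interior_subset hx)).hasDerivWithinAt) fun x hx => ?_
  have hx : √D ≤ x := interior_subset hx
  have hx0 := pos_of_le hx
  have hle : D / x ≤ x := (div_le_iff₀ hx0).2 ((Real.sqrt_le_left hx0.le).1 hx |>.trans_eq (sq x))
  exact div_nonpos_of_nonpos_of_nonneg
    (sub_nonpos.2 (mul_log_add_sub_log_le (by positivity) hle)) hx0.le

lemma splitEntropy_le_of_mul_eq_of_add_le {x y x' y' : ℝ} (hx : 0 ≤ x) (hy : 0 ≤ y)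
    (hx' : 0 ≤ x') (hy' : 0 ≤ y') (hmul : x * y = x' * y') (hadd : x + y ≤ x' + y') :
    splitEntropy x' y' ≤ splitEntropy x y := by
  wlog hyx : y ≤ x generalizing x y
  · rw [splitEntropy_comm x]
    exact this hy hx (by rwa [mul_comm]) (by rwa [add_comm]) (le_of_not_ge hyx)
  wlog hyx' : y' ≤ x' generalizing x' y'
  · rw [splitEntropy_comm x']
    exact this hy' hx' (by rwa [mul_comm y']) (by rwa [add_comm y']) (le_of_not_ge hyx')
  rcases (mul_nonneg hx hy).eq_or_lt with hD | hD
  · rw [splitEntropy_eq_zero_of_mul_eq_zero hD.symm,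
      splitEntropy_eq_zero_of_mul_eq_zero (hmul.symm.trans hD.symm)]
  have hx0 : 0 < x := pos_of_mul_pos_left hD hy
  have hx0' : 0 < x' := pos_of_mul_pos_left (hmul ▸ hD) hy'
  have sub_le : x - y ≤ x' - y' := abs_le_of_sq_le_sq' (by nlinarith) (by linarith) |>.2
  have hanti := antitoneOn_splitEntropy_div hD (a := x) (b := x')
    (Real.sqrt_le_iff.2 ⟨hx, by nlinarith⟩) (Real.sqrt_le_iff.2 ⟨hx', by nlinarith⟩) (by linarith)
  have hdiv : x * y / x = y := mul_div_cancel_left₀ y hx0.ne'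
  have hdiv' : x * y / x' = y' := by rw [hmul, mul_div_cancel_left₀ y' hx0'.ne']
  simpa only [hdiv, hdiv'] using hanti

lemma isHermitian_diagonal_ofReal {n : Type*} [DecidableEq n] (d : n → ℝ) :
    (Matrix.diagonal fun i => (d i : ℂ)).IsHermitian :=
  Matrix.isHermitian_diagonal_of_self_adjoint _ (funext fun i => Complex.conj_ofReal (d i))

section VonNeumannEntropy

variable {m n : Type*} [Fintype m] [DecidableEq m] [Fintype n] [DecidableEq n]

lemma vnEnt_eq_sum_negMulLog {M : Matrix n n ℂ} (hM : M.IsHermitian) :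
    vnEnt M = ∑ i, negMulLog (hM.eigenvalues i) := by
  simp only [vnEnt, dif_pos hM, Real.negMulLog_eq_neg]

lemma vnEnt_eq_sum_roots_charpoly {M : Matrix n n ℂ} (hM : M.IsHermitian) :
    vnEnt M = (M.charpoly.roots.map fun c => negMulLog c.re).sum := by
  rw [vnEnt_eq_sum_negMulLog hM, hM.roots_charpoly_eq_eigenvalues, Multiset.map_map]
  rfl

lemma vnEnt_reindex (e : m ≃ n) {M : Matrix m m ℂ} (hM : M.IsHermitian) :
    vnEnt (Matrix.reindex e e M) = vnEnt M := by
  have he : (Matrix.reindex e e M).IsHermitian := hM.submatrix e.symm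
  rw [vnEnt_eq_sum_roots_charpoly he, vnEnt_eq_sum_roots_charpoly hM,
    Matrix.charpoly_reindex]

lemma vnEnt_diagonal (d : n → ℝ) :
    vnEnt (Matrix.diagonal fun i => (d i : ℂ)) = ∑ i, negMulLog (d i) := by
  have hroots : (∏ i, (Polynomial.X - Polynomial.C (d i : ℂ))).roots =
      Finset.univ.val.map fun i => (d i : ℂ) := by
    rw [← Polynomial.roots_multiset_prod_X_sub_C (Finset.univ.val.map _), Multiset.map_map]
    rfl
  rw [vnEnt_eq_sum_roots_charpoly (isHermitian_diagonal_ofReal d),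
    Matrix.charpoly_diagonal, hroots, Multiset.map_map]
  rfl

lemma vnEnt_fromBlocks_zero {A : Matrix m m ℂ} {B : Matrix n n ℂ} (hA : A.IsHermitian)
    (hB : B.IsHermitian) : vnEnt (Matrix.fromBlocks A 0 0 B) = vnEnt A + vnEnt B := by
  have hAB : (Matrix.fromBlocks A 0 0 B).IsHermitian :=
    hA.fromBlocks Matrix.conjTranspose_zero hB
  rw [vnEnt_eq_sum_roots_charpoly hAB, vnEnt_eq_sum_roots_charpoly hA,
    vnEnt_eq_sum_roots_charpoly hB, Matrix.charpoly_fromBlocks_zero₁₂,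
    Polynomial.roots_mul (A.charpoly_monic.mul B.charpoly_monic).ne_zero, Multiset.map_add,
    Multiset.sum_add]

/-- The entropy of an unnormalized state in excess of that of its total weight: for positive
semidefinite `M ≠ 0` it equals `tr M * S (M / tr M)`. -/
noncomputable def excessEntropy (M : Matrix n n ℂ) : ℝ := vnEnt M - negMulLog M.trace.re

end VonNeumannEntropy

lemma excessEntropy_eq_splitEntropy {M : Matrix (Fin 2) (Fin 2) ℂ} (hM : M.IsHermitian) :
    excessEntropy M = splitEntropy (hM.eigenvalues 0) (hM.eigenvalues 1) := by
  simp [excessEntropy, splitEntropy, vnEnt_eq_sum_negMulLog hM, hM.trace_eq_sum_eigenvalues]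

lemma excessEntropy_le_of_det_eq_of_trace_le {M N : Matrix (Fin 2) (Fin 2) ℂ}
    (hM : M.PosSemidef) (hN : N.PosSemidef) (hdet : M.det = N.det)
    (htrace : M.trace.re ≤ N.trace.re) : excessEntropy N ≤ excessEntropy M := by
  rw [excessEntropy_eq_splitEntropy hM.1, excessEntropy_eq_splitEntropy hN.1]
  apply splitEntropy_le_of_mul_eq_of_add_le (hM.eigenvalues_nonneg 0) (hM.eigenvalues_nonneg 1)
    (hN.eigenvalues_nonneg 0) (hN.eigenvalues_nonneg 1)
  · rw [hM.1.det_eq_prod_eigenvalues, hN.1.det_eq_prod_eigenvalues, Fin.prod_univ_two,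
      Fin.prod_univ_two] at hdet
    exact_mod_cast hdet
  · simpa [hM.1.trace_eq_sum_eigenvalues, hN.1.trace_eq_sum_eigenvalues] using htrace

/-- The polarization dependent loss operation `Λ(ρ) = A ρ Aᴴ` with `A = diag(√p, √q)`. -/
noncomputable def pdl (p q : ℝ) (ρ : Matrix (Fin 2) (Fin 2) ℂ) : Matrix (Fin 2) (Fin 2) ℂ :=
  Matrix.diagonal ![(√p : ℂ), (√q : ℂ)] * ρ * (Matrix.diagonal ![(√p : ℂ), (√q : ℂ)])ᴴ

/-- The coherent information of the generalized erasure channel of the polarization dependent loss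
operation. -/
noncomputable def pdlCoherentInfo (pH pV : ℝ) (ρ : Matrix (Fin 2) (Fin 2) ℂ) : ℝ :=
  vnEnt (GammaPDL pH pV ρ) - vnEnt (GammaPDLc pH pV ρ)

/-- The diagonal density matrix with Bloch vector `(0, 0, z)`. -/
noncomputable def diagState (z : ℝ) : Matrix (Fin 2) (Fin 2) ℂ :=
  !![(((1 + z) / 2 : ℝ) : ℂ), 0; 0, (((1 - z) / 2 : ℝ) : ℂ)]

section PolarizationDependentLoss

variable {p q : ℝ} {ρ σ : Matrix (Fin 2) (Fin 2) ℂ}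

lemma pdl_posSemidef (p q : ℝ) (hρ : ρ.PosSemidef) : (pdl p q ρ).PosSemidef :=
  hρ.mul_mul_conjTranspose_same _

lemma pdl_eq (hp : 0 ≤ p) (hq : 0 ≤ q) (ρ : Matrix (Fin 2) (Fin 2) ℂ) :
    pdl p q ρ = !![(p : ℂ) * ρ 0 0, (√(p * q) : ℂ) * ρ 0 1;
      (√(p * q) : ℂ) * ρ 1 0, (q : ℂ) * ρ 1 1] := by
  have sq_sqrt {r : ℝ} (hr : 0 ≤ r) : (√r : ℂ) * √r = r := by
    exact_mod_cast Real.mul_self_sqrt hr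
  ext i j
  fin_cases i <;> fin_cases j <;>
    simp [pdl, Matrix.diagonal_conjTranspose, Real.sqrt_mul hp, ← sq_sqrt hp, ← sq_sqrt hq] <;>
    ring

lemma trace_pdl (hp : 0 ≤ p) (hq : 0 ≤ q) (ρ : Matrix (Fin 2) (Fin 2) ℂ) :
    (pdl p q ρ).trace = p * ρ 0 0 + q * ρ 1 1 := by
  simp [pdl_eq hp hq, Matrix.trace_fin_two]

lemma det_pdl (hp : 0 ≤ p) (hq : 0 ≤ q) (ρ : Matrix (Fin 2) (Fin 2) ℂ) :
    (pdl p q ρ).det = p * q * ρ.det := by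
  have sq_sqrt : (√(p * q) : ℂ) ^ 2 = p * q := by
    exact_mod_cast Real.sq_sqrt (mul_nonneg hp hq)
  rw [pdl_eq hp hq, Matrix.det_fin_two_of, Matrix.det_fin_two]
  linear_combination (-ρ 0 1 * ρ 1 0) * sq_sqrt

lemma trace_pdl_add_trace_pdl_compl (hp : p ∈ Set.Icc (0 : ℝ) 1) (hq : q ∈ Set.Icc (0 : ℝ) 1)
    (ρ : Matrix (Fin 2) (Fin 2) ℂ) :
    (pdl p q ρ).trace + (pdl (1 - p) (1 - q) ρ).trace = ρ.trace := by
  rw [trace_pdl hp.1 hq.1, trace_pdl (sub_nonneg.2 hp.2) (sub_nonneg.2 hq.2),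
    Matrix.trace_fin_two]
  push_cast
  ring

lemma coe_re_trace_pdl (p q : ℝ) (hρ : ρ.PosSemidef) :
    ((pdl p q ρ).trace.re : ℂ) = (pdl p q ρ).trace :=
  (Complex.eq_re_of_ofReal_le (r := 0) (by simpa using (pdl_posSemidef p q hρ).trace_nonneg)).symm

lemma GammaPDL_eq_reindex_fromBlocks (hp : p ∈ Set.Icc (0 : ℝ) 1) (hq : q ∈ Set.Icc (0 : ℝ) 1)
    (hρ : ρ.PosSemidef) :
    GammaPDL p q ρ = Matrix.reindex finSumFinEquiv finSumFinEquiv (Matrix.fromBlocks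
      (pdl p q ρ) 0 0 (Matrix.diagonal fun _ : Fin 1 =>
        ((pdl (1 - p) (1 - q) ρ).trace.re : ℂ))) := by
  rw [coe_re_trace_pdl _ _ hρ, eq_sub_of_add_eq' (trace_pdl_add_trace_pdl_compl hp hq ρ),
    trace_pdl hp.1 hq.1, pdl_eq hp.1 hq.1, ← Equiv.symm_apply_eq]
  ext (i | i) (j | j) <;> fin_cases i <;> fin_cases j <;>
    simp [GammaPDL, finSumFinEquiv, sub_sub]

lemma GammaPDLc_eq_reindex_fromBlocks (hp : p ∈ Set.Icc (0 : ℝ) 1) (hq : q ∈ Set.Icc (0 : ℝ) 1)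
    (hρ : ρ.PosSemidef) :
    GammaPDLc p q ρ = Matrix.reindex finSumFinEquiv finSumFinEquiv (Matrix.fromBlocks
      (Matrix.diagonal fun _ : Fin 1 => ((pdl p q ρ).trace.re : ℂ)) 0 0
      (pdl (1 - p) (1 - q) ρ)) := by
  rw [coe_re_trace_pdl _ _ hρ, trace_pdl hp.1 hq.1,
    pdl_eq (sub_nonneg.2 hp.2) (sub_nonneg.2 hq.2), ← Equiv.symm_apply_eq]
  ext (i | i) (j | j) <;> fin_cases i <;> fin_cases j <;>
    simp [GammaPDLc, finSumFinEquiv]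

lemma vnEnt_GammaPDL (hp : p ∈ Set.Icc (0 : ℝ) 1) (hq : q ∈ Set.Icc (0 : ℝ) 1)
    (hρ : ρ.PosSemidef) :
    vnEnt (GammaPDL p q ρ) =
      vnEnt (pdl p q ρ) + negMulLog (pdl (1 - p) (1 - q) ρ).trace.re := by
  have hblock := (pdl_posSemidef p q hρ).isHermitian
  have hscalar := isHermitian_diagonal_ofReal
    fun _ : Fin 1 => (pdl (1 - p) (1 - q) ρ).trace.re
  rw [GammaPDL_eq_reindex_fromBlocks hp hq hρ,
    vnEnt_reindex _ (hblock.fromBlocks Matrix.conjTranspose_zero hscalar),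
    vnEnt_fromBlocks_zero hblock hscalar, vnEnt_diagonal, Fin.sum_univ_one]

lemma vnEnt_GammaPDLc (hp : p ∈ Set.Icc (0 : ℝ) 1) (hq : q ∈ Set.Icc (0 : ℝ) 1)
    (hρ : ρ.PosSemidef) :
    vnEnt (GammaPDLc p q ρ) =
      negMulLog (pdl p q ρ).trace.re + vnEnt (pdl (1 - p) (1 - q) ρ) := by
  have hblock := (pdl_posSemidef (1 - p) (1 - q) hρ).isHermitian
  have hscalar := isHermitian_diagonal_ofReal fun _ : Fin 1 => (pdl p q ρ).trace.re
  rw [GammaPDLc_eq_reindex_fromBlocks hp hq hρ,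
    vnEnt_reindex _ (hscalar.fromBlocks Matrix.conjTranspose_zero hblock),
    vnEnt_fromBlocks_zero hscalar hblock, vnEnt_diagonal, Fin.sum_univ_one]

lemma pdlCoherentInfo_eq_excessEntropy_sub (hp : p ∈ Set.Icc (0 : ℝ) 1)
    (hq : q ∈ Set.Icc (0 : ℝ) 1) (hρ : ρ.PosSemidef) :
    pdlCoherentInfo p q ρ =
      excessEntropy (pdl p q ρ) - excessEntropy (pdl (1 - p) (1 - q) ρ) := by
  simp only [pdlCoherentInfo, excessEntropy, vnEnt_GammaPDL hp hq hρ, vnEnt_GammaPDLc hp hq hρ]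
  ring

lemma pdlCoherentInfo_le_of_det_eq_of_trace_pdl_le (hp : p ∈ Set.Icc (0 : ℝ) 1)
    (hq : q ∈ Set.Icc (0 : ℝ) 1) (hρ : ρ.PosSemidef) (hσ : σ.PosSemidef)
    (hdet : σ.det = ρ.det) (htrace : σ.trace = ρ.trace)
    (hpdl : (pdl p q σ).trace.re ≤ (pdl p q ρ).trace.re) :
    pdlCoherentInfo p q ρ ≤ pdlCoherentInfo p q σ := by
  have hp' : 0 ≤ 1 - p := sub_nonneg.2 hp.2
  have hq' : 0 ≤ 1 - q := sub_nonneg.2 hq.2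
  have hpdlc : (pdl (1 - p) (1 - q) ρ).trace.re ≤ (pdl (1 - p) (1 - q) σ).trace.re := by
    have hsum := congrArg Complex.re ((trace_pdl_add_trace_pdl_compl hp hq σ).trans
      (htrace.trans (trace_pdl_add_trace_pdl_compl hp hq ρ).symm))
    simp only [Complex.add_re] at hsum
    linarith
  rw [pdlCoherentInfo_eq_excessEntropy_sub hp hq hρ, pdlCoherentInfo_eq_excessEntropy_sub hp hq hσ]
  refine sub_le_sub
    (excessEntropy_le_of_det_eq_of_trace_le (pdl_posSemidef p q hσ) (pdl_posSemidef p q hρ) ?_ hpdl)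
    (excessEntropy_le_of_det_eq_of_trace_le (pdl_posSemidef _ _ hρ) (pdl_posSemidef _ _ hσ) ?_
      hpdlc)
  · rw [det_pdl hp.1 hq.1, det_pdl hp.1 hq.1, hdet]
  · rw [det_pdl hp' hq', det_pdl hp' hq', hdet]

lemma diagState_posSemidef {z : ℝ} (hz : z ∈ Set.Icc (-1 : ℝ) 1) : (diagState z).PosSemidef := by
  have heq : diagState z =
      Matrix.diagonal ![(((1 + z) / 2 : ℝ) : ℂ), (((1 - z) / 2 : ℝ) : ℂ)] := by
    rw [diagState, Matrix.diagonal_fin_two]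
    simp only [Matrix.cons_val_zero, Matrix.cons_val_one]
  rw [heq, Matrix.posSemidef_diagonal_iff, Fin.forall_fin_two]
  exact ⟨Complex.zero_le_real.2 (by linarith [hz.1]), Complex.zero_le_real.2 (by linarith [hz.2])⟩

lemma trace_diagState (z : ℝ) : (diagState z).trace = 1 := by
  rw [diagState, Matrix.trace_fin_two_of]
  push_cast
  ring

lemma det_diagState (z : ℝ) : (diagState z).det = (((1 - z ^ 2) / 4 : ℝ) : ℂ) := by
  rw [diagState, Matrix.det_fin_two_of]
  push_cast
  ring

lemma exists_sq_eq_and_mul_le {x s : ℝ} (c : ℝ) (h : x ^ 2 ≤ s) :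
    ∃ z, z ^ 2 = s ∧ c * z ≤ c * x := by
  have hsq : √s ^ 2 = s := Real.sq_sqrt ((sq_nonneg x).trans h)
  obtain ⟨neg_le, le⟩ := abs_le.1 (Real.abs_le_sqrt h)
  rcases le_total 0 c with hc | hc
  · exact ⟨-√s, by rw [neg_sq, hsq], mul_le_mul_of_nonneg_left neg_le hc⟩
  · exact ⟨√s, hsq, mul_le_mul_of_nonpos_left le hc⟩

lemma sq_re_sub_re_le_sq_trace_sub_four_mul_det (hρ : ρ.IsHermitian) :
    ((ρ 0 0).re - (ρ 1 1).re) ^ 2 ≤ ρ.trace.re ^ 2 - 4 * ρ.det.re := by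
  have hdet : ρ.det.re = (ρ 0 0).re * (ρ 1 1).re - Complex.normSq (ρ 0 1) := by
    have him : (ρ 0 0).im = 0 := Complex.conj_eq_iff_im.1 (hρ.apply 0 0)
    rw [Matrix.det_fin_two, ← hρ.apply 1 0, Complex.star_def, Complex.mul_conj]
    simp [him]
  rw [hdet, Matrix.trace_fin_two, Complex.add_re]
  linarith [Complex.normSq_nonneg (ρ 0 1)]

lemma exists_diagState_det_eq_and_trace_pdl_le (hp : 0 ≤ p) (hq : 0 ≤ q) (hρ : ρ.PosSemidef)
    (htrace : ρ.trace = 1) :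
    ∃ z ∈ Set.Icc (-1 : ℝ) 1, (diagState z).det = ρ.det ∧
      (pdl p q (diagState z)).trace.re ≤ (pdl p q ρ).trace.re := by
  have hgap := sq_re_sub_re_le_sq_trace_sub_four_mul_det hρ.isHermitian
  obtain ⟨hdet_re, hdet_im⟩ := Complex.le_def.1 hρ.det_nonneg
  simp only [Complex.zero_re, Complex.zero_im] at hdet_re hdet_im
  simp only [htrace, Complex.one_re, one_pow] at hgap
  obtain ⟨z, hz_sq, hz_le⟩ := exists_sq_eq_and_mul_le (p - q) hgap
  refine ⟨z, abs_le.1 (sq_le_one_iff_abs_le_one z |>.1 (by linarith)), ?_, ?_⟩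
  · rw [det_diagState]
    exact Complex.ext (by rw [Complex.ofReal_re]; linarith) hdet_im
  · have hsum : (ρ 0 0).re + (ρ 1 1).re = 1 := by
      rw [← Complex.add_re, ← Matrix.trace_fin_two, htrace, Complex.one_re]
    simp only [trace_pdl hp hq, diagState, Matrix.of_apply, Matrix.cons_val_zero,
      Matrix.cons_val_one, Matrix.cons_val', Matrix.cons_val_fin_one, Complex.add_re,
      Complex.re_ofReal_mul, Complex.ofReal_re]
    linear_combination hz_le / 2 - (p + q) / 2 * hsum

end PolarizationDependentLoss

theorem pdl_coherent_information_diagonal_sup_general (pH pV : ℝ)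
    (hH : pH ∈ Set.Icc (0 : ℝ) 1) (hV : pV ∈ Set.Icc (0 : ℝ) 1) :
    sSup {x : ℝ | ∃ ρ : Matrix (Fin 2) (Fin 2) ℂ, ρ.PosSemidef ∧ ρ.trace = 1 ∧
        x = pdlCoherentInfo pH pV ρ}
      = sSup {x : ℝ | ∃ z ∈ Set.Icc (-1 : ℝ) 1, x = pdlCoherentInfo pH pV (diagState z)} := by
  apply csSup_eq_csSup_of_forall_exists_le
  · rintro _ ⟨ρ, hρ, htrace, rfl⟩
    obtain ⟨z, hz, hdet, hpdl⟩ :=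
      exists_diagState_det_eq_and_trace_pdl_le hH.1 hV.1 hρ htrace
    exact ⟨_, ⟨z, hz, rfl⟩, pdlCoherentInfo_le_of_det_eq_of_trace_pdl_le hH hV hρ
      (diagState_posSemidef hz) hdet ((trace_diagState z).trans htrace.symm) hpdl⟩
  · rintro _ ⟨z, hz, rfl⟩
    exact ⟨_, ⟨diagState z, diagState_posSemidef hz, trace_diagState z, rfl⟩, le_rfl⟩

/-- for p_H, p_V ∈ (0,1] with max(p_H,p_V) > 1/2, the supremum of the
coherent information q over all 2×2 density matrices equals the supremum of q over the
diagonal density matrices diag((1+z)/2, (1−z)/2), z ∈ [−1,1]. -/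
theorem pdl_coherent_information_diagonal_sup (pH pV : ℝ)
    (hH : pH ∈ Set.Ioc (0:ℝ) 1) (hV : pV ∈ Set.Ioc (0:ℝ) 1)
    (hmax : 1/2 < max pH pV) :
    sSup {x : ℝ | ∃ ρ : Matrix (Fin 2) (Fin 2) ℂ, ρ.PosSemidef ∧ ρ.trace = 1 ∧
        x = vnEnt (GammaPDL pH pV ρ) - vnEnt (GammaPDLc pH pV ρ)}
      = sSup {x : ℝ | ∃ z ∈ Set.Icc (-1 : ℝ) 1,
        x = vnEnt (GammaPDL pH pV !![(((1 + z) / 2 : ℝ) : ℂ), 0; 0, (((1 - z) / 2 : ℝ) : ℂ)])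
          - vnEnt (GammaPDLc pH pV
              !![(((1 + z) / 2 : ℝ) : ℂ), 0; 0, (((1 - z) / 2 : ℝ) : ℂ)])} :=
  pdl_coherent_information_diagonal_sup_general pH pV (Set.Ioc_subset_Icc_self hH)
    (Set.Ioc_subset_Icc_self hV)
end
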